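/- arXiv:1911.10731 — 3 statements merged into one kernel-verified Lean document; each statement's English description precedes it below -/
import Mathlib

section
/- For every cellular automaton f on A^ℤ, the generic limit set ω̃(f) is a nonempty subshift (a nonempty closed σ-invariant subset of A^ℤ) and it is f-invariant: f(ω̃(f)) = ω̃(f). -/
open Filter Set Function

namespace Gls

variable {A : Type*}

/-- The left shift map on `A^ℤ`. -/
def shift (x : ℤ → A) : ℤ → A := fun i => x (i + 1)

/-- A cellular automaton: a continuous shift-commuting self-map of the full shift. -/
def IsCA [TopologicalSpace A] (f : (ℤ → A) → (ℤ → A)) : Prop :=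
  Continuous f ∧ f ∘ shift = shift ∘ f

/-- The set of limit points of the forward orbit of `x` under `f`. -/
def omegaSet [TopologicalSpace A] (f : (ℤ → A) → (ℤ → A)) (x : ℤ → A) : Set (ℤ → A) :=
  {y | MapClusterPt y atTop fun t => f^[t] x}

/-- The realm of attraction of `Y`. -/
def realm [TopologicalSpace A] (f : (ℤ → A) → (ℤ → A)) (Y : Set (ℤ → A)) : Set (ℤ → A) :=
  {x | omegaSet f x ⊆ Y}

/-- The generic limit set: the intersection of all closed sets whose realm is comeager. -/
def genLimitSet [TopologicalSpace A] (f : (ℤ → A) → (ℤ → A)) : Set (ℤ → A) :=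
  ⋂₀ {C | IsClosed C ∧ realm f C ∈ residual (ℤ → A)}

/-- The word `x_{[i, i+n)}` of length `n` read in the configuration `x` from position `i`. -/
def word (x : ℤ → A) (i : ℤ) (n : ℕ) : List A :=
  (List.range n).map fun k => x (i + k)

/-- The cylinder set `[w]_i`. -/
def cylinder (w : List A) (i : ℤ) : Set (ℤ → A) := {x | word x i w.length = w}

/-- The language of `X`: all finite words occurring in points of `X`. -/
def lang (X : Set (ℤ → A)) : Set (List A) :=
  {w | ∃ x ∈ X, ∃ i : ℤ, word x i w.length = w}


theorem realm_gen [Fintype A] [TopologicalSpace A] [DiscreteTopology A]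
    (f : (ℤ → A) → (ℤ → A)) : realm f (genLimitSet f) ∈ residual (ℤ → A) := by
  obtain ⟨T, hTc, hTS, hT⟩ := TopologicalSpace.isOpen_sUnion_countable
    {U : Set (ℤ → A) | IsClosed Uᶜ ∧ realm f Uᶜ ∈ residual (ℤ → A)}
    (fun U hU => isClosed_compl_iff.1 hU.1)
  have h : (⋂ U ∈ T, realm f Uᶜ) ∈ residual (ℤ → A) :=
    (countable_bInter_mem hTc).2 fun U hU => (hTS hU).2
  refine mem_of_superset h ?_
  intro x hx y hy C hC
  by_contra hyC
  have h1 : y ∈ ⋃₀ {U : Set (ℤ → A) | IsClosed Uᶜ ∧ realm f Uᶜ ∈ residual (ℤ → A)} :=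
    ⟨Cᶜ, by simpa using hC, hyC⟩
  rw [← hT] at h1
  obtain ⟨U, hU, hyU⟩ := h1
  exact (mem_iInter₂.1 hx U hU hy) hyU

theorem gen_subset [TopologicalSpace A] {f : (ℤ → A) → (ℤ → A)} {C : Set (ℤ → A)}
    (hC : IsClosed C) (h : realm f C ∈ residual (ℤ → A)) : genLimitSet f ⊆ C :=
  sInter_subset_of_mem ⟨hC, h⟩

theorem omega_map [TopologicalSpace A] {f g : (ℤ → A) → (ℤ → A)} (hg : Continuous g)
    (hc : Function.Commute f g) {x y : ℤ → A} (hy : y ∈ omegaSet f x) :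
    g y ∈ omegaSet f (g x) := by
  have h : MapClusterPt (g y) atTop (g ∘ fun t => f^[t] x) :=
    MapClusterPt.continuousAt_comp hg.continuousAt hy
  have e : (g ∘ fun t => f^[t] x) = fun t => f^[t] (g x) := by
    funext t
    exact ((hc.iterate_left t) x).symm
  rw [e] at h
  exact h

theorem omega_shift_back [TopologicalSpace A] {f : (ℤ → A) → (ℤ → A)} {x y : ℤ → A}
    (hy : y ∈ omegaSet f (f x)) : y ∈ omegaSet f x := by
  have h : MapClusterPt y atTop ((fun t => f^[t] x) ∘ fun t => t + 1) := hy
  exact h.of_comp (tendsto_add_atTop_nat 1)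

theorem omega_surj [Fintype A] [TopologicalSpace A] [DiscreteTopology A]
    {f : (ℤ → A) → (ℤ → A)} (hf : Continuous f) {x y : ℤ → A} (hy : y ∈ omegaSet f x) :
    ∃ z ∈ omegaSet f x, f z = y := by
  obtain ⟨U, hU, hUy⟩ := mapClusterPt_iff_ultrafilter.1 hy
  obtain ⟨z, -, hz⟩ := isCompact_univ.ultrafilter_le_nhds
    (U.map fun t => f^[t - 1] x) (by simp)
  have hz' : Tendsto (fun t => f^[t - 1] x) U (nhds z) := hz
  refine ⟨z, ?_, ?_⟩
  · have h : MapClusterPt z (U : Filter ℕ) ((fun t => f^[t] x) ∘ fun t => t - 1) :=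
      hz'.mapClusterPt
    exact h.of_comp ((tendsto_sub_atTop_nat 1).mono_left hU)
  · have h1 : Tendsto (fun t => f (f^[t - 1] x)) U (nhds (f z)) := (hf.tendsto z).comp hz'
    refine tendsto_nhds_unique (h1.congr' ?_) hUy
    filter_upwards [hU (eventually_ge_atTop 1)] with t ht
    rw [← Function.iterate_succ_apply' f]
    congr 2
    exact Nat.sub_add_cancel ht

theorem gen_homeo [Fintype A] [TopologicalSpace A] [DiscreteTopology A]
    {f : (ℤ → A) → (ℤ → A)} (e : (ℤ → A) ≃ₜ (ℤ → A))
    (hc : Function.Commute f e) {y : ℤ → A} (hy : y ∈ genLimitSet f) : e y ∈ genLimitSet f := by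
  have hcl : IsClosed (genLimitSet f) := isClosed_sInter fun C hC => hC.1
  refine gen_subset (C := e ⁻¹' genLimitSet f) (hcl.preimage e.continuous) ?_ hy
  have h : e ⁻¹' realm f (genLimitSet f) ∈ residual (ℤ → A) :=
    (tendsto_residual_of_isOpenMap e.continuous e.isOpenMap) (realm_gen f)
  refine mem_of_superset h ?_
  intro x hx y hy
  exact hx (omega_map e.continuous hc hy)

def shiftHomeo [TopologicalSpace A] : (ℤ → A) ≃ₜ (ℤ → A) where
  toFun := shift
  invFun := fun x i => x (i - 1)
  left_inv := fun x => by funext i; simp [shift]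
  right_inv := fun x => by funext i; simp [shift]
  continuous_toFun := by unfold shift; fun_prop
  continuous_invFun := by fun_prop

/-- the generic limit set of a CA is a nonempty, closed, shift-invariant
(`σ(ω̃(f)) = ω̃(f)`) set, and it is `f`-invariant: `f(ω̃(f)) = ω̃(f)`. -/
theorem stmt0 [Fintype A] [Nonempty A] [TopologicalSpace A] [DiscreteTopology A]
    (f : (ℤ → A) → (ℤ → A)) (hf : IsCA f) :
    (genLimitSet f).Nonempty ∧ IsClosed (genLimitSet f) ∧
      shift '' genLimitSet f = genLimitSet f ∧
      f '' genLimitSet f = genLimitSet f := by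
  obtain ⟨hcont, hcomm⟩ := hf
  have hcl : IsClosed (genLimitSet f) := isClosed_sInter fun C hC => hC.1
  have hs : Function.Commute f (shiftHomeo : (ℤ → A) ≃ₜ (ℤ → A)) := fun x => congrFun hcomm x
  have hs' : Function.Commute f (shiftHomeo : (ℤ → A) ≃ₜ (ℤ → A)).symm := fun x => by
    apply (shiftHomeo : (ℤ → A) ≃ₜ (ℤ → A)).injective
    rw [← hs, Homeomorph.apply_symm_apply, Homeomorph.apply_symm_apply]
  refine ⟨?_, hcl, ?_, ?_⟩
  · obtain ⟨x, hx⟩ := (dense_of_mem_residual (realm_gen f)).nonempty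
    obtain ⟨y, -, hy⟩ := (isCompact_univ (X := ℤ → A)).exists_mapClusterPt
      (f := (atTop : Filter ℕ)) (u := fun t => f^[t] x) (by simp)
    exact ⟨y, hx hy⟩
  · apply Subset.antisymm
    · rintro _ ⟨y, hy, rfl⟩
      exact gen_homeo shiftHomeo hs hy
    · intro y hy
      exact ⟨_, gen_homeo shiftHomeo.symm hs' hy, shiftHomeo.apply_symm_apply y⟩
  · apply Subset.antisymm
    · rintro _ ⟨y, hy, rfl⟩
      refine gen_subset (C := f ⁻¹' genLimitSet f) (hcl.preimage hcont) ?_ hy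
      refine mem_of_superset (realm_gen f) ?_
      intro x hx y hy
      exact hx (omega_shift_back (omega_map hcont (Function.Commute.refl f) hy))
    · refine gen_subset (hcl.isCompact.image hcont).isClosed ?_
      refine mem_of_superset (realm_gen f) ?_
      intro x hx y hy
      obtain ⟨z, hz, rfl⟩ := omega_surj hcont hy
      exact ⟨z, hx hz, rfl⟩

end Gls
end

section
/- Let f be a cellular automaton on A^ℤ. A word s ∈ A* occurs in ω̃(f) (i.e., s ∈ L(ω̃(f))) if and only if there exist a word v ∈ A* and i ∈ ℤ such that for all words u, w ∈ A* there exist infinitely many t ∈ ℕ with f^t([u v w]_{i−|u|}) ∩ [s] ≠ ∅. -/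
open Filter Set Function

namespace Gls

variable {A : Type*}

theorem word_def (x : ℤ → A) (i : ℤ) (n : ℕ) :
    word x i n = (List.range n).map fun k : ℕ => x (i + (k : ℤ)) := by
  have h : ∀ l : List ℕ, (l.flatMap fun a : ℕ => [(a : ℤ)]) = l.map fun a : ℕ => (a : ℤ) := by
    intro l
    induction l with
    | nil => rfl
    | cons a l ih => simp [List.flatMap_cons, ih]
  show List.map _ ((List.range n).flatMap fun a : ℕ => [(a : ℤ)]) = _
  rw [h, List.map_map]
  rfl

theorem word_eq_iff (x y : ℤ → A) (i : ℤ) (n : ℕ) :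
    word y i n = word x i n ↔ ∀ k : ℕ, k < n → y (i + k) = x (i + k) := by
  simp [word_def]

theorem word_length (x : ℤ → A) (i : ℤ) (n : ℕ) : (word x i n).length = n := by
  simp [word_def]

theorem word_add (x : ℤ → A) (i : ℤ) (m n : ℕ) :
    word x i (m + n) = word x i m ++ word x (i + m) n := by
  simp only [word_def, List.range_add, List.map_append, List.map_map]
  congr 1
  apply List.map_congr_left
  intro k _
  simp [add_assoc]

theorem isOpen_word [TopologicalSpace A] [DiscreteTopology A] (w : List A) (i : ℤ) (n : ℕ) :
    IsOpen {x : ℤ → A | word x i n = w} := by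
  rw [isOpen_iff_mem_nhds]
  intro x hx
  have hx' : word x i n = w := hx
  have : ∀ k : Fin n, ∀ᶠ y in nhds x, y (i + k) = x (i + k) := by
    intro k
    have hc : Continuous fun y : ℤ → A => y (i + k) := continuous_apply _
    exact hc.continuousAt.eventually_mem
      ((isOpen_discrete ({x (i + k)} : Set A)).mem_nhds rfl)
  filter_upwards [eventually_all.2 this] with y hy
  show word y i n = w
  rw [← hx', word_eq_iff]
  exact fun k hk => hy ⟨k, hk⟩

theorem isClopen_cylinder [TopologicalSpace A] [DiscreteTopology A] (w : List A) (i : ℤ) :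
    IsClopen (cylinder w i) := by
  refine ⟨⟨?_⟩, isOpen_word _ _ _⟩
  have : (cylinder w i)ᶜ = ⋃ v ∈ {v : List A | v ≠ w}, {x | word x i w.length = v} := by
    ext x; simp [cylinder]
  rw [this]
  exact isOpen_biUnion fun v _ => isOpen_word _ _ _

theorem basis [TopologicalSpace A] [DiscreteTopology A] (v : List A) (i : ℤ) (x : ℤ → A)
    (hx : x ∈ cylinder v i) (U : Set (ℤ → A)) (hU : IsOpen U) (hxU : x ∈ U) :
    ∃ u w : List A, x ∈ cylinder (u ++ v ++ w) (i - u.length) ∧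
      cylinder (u ++ v ++ w) (i - u.length) ⊆ U := by
  obtain ⟨I, o, ho, hI⟩ := isOpen_pi_iff.1 hU x hxU
  obtain ⟨n, hn⟩ : ∃ n : ℕ, ∀ a ∈ I, (a - i).natAbs < n :=
    ⟨I.sup (fun a => (a - i).natAbs) + 1, fun a ha =>
      Nat.lt_succ_of_le (Finset.le_sup (f := fun a => (a - i).natAbs) ha)⟩
  have hx' : word x i v.length = v := hx
  have key : word x (i - n) (n + v.length + n)
      = word x (i - n) n ++ v ++ word x (i + v.length) n := by
    rw [word_add, word_add]
    have e1 : i - (n : ℤ) + n = i := by ring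
    have e2 : i - (n : ℤ) + ((n + v.length : ℕ) : ℤ) = i + v.length := by push_cast; ring
    rw [e1, e2, hx']
  refine ⟨word x (i - n) n, word x (i + v.length) n, ?_, ?_⟩
  · rw [← key, word_length]
    show word x _ _ = _
    rw [word_length]
  · rw [← key, word_length]
    intro y hy
    have hy' : word y _ _ = _ := hy
    rw [word_length, word_eq_iff] at hy'
    apply hI
    intro a ha
    have h1 := hn a ha
    have h2 := hy' (a - i + n).toNat (by omega)
    have h3 : i - (n : ℤ) + ((a - i + n).toNat : ℤ) = a := by omega
    rw [h3] at h2
    rw [h2]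
    exact (ho a ha).2

/-- Translation by `j`. -/
def tr (j : ℤ) (x : ℤ → A) : ℤ → A := fun k => x (k + j)

theorem tr_comm (f : (ℤ → A) → (ℤ → A)) (hf : f ∘ shift = shift ∘ f) (j : ℤ) (x : ℤ → A) :
    f (tr j x) = tr j (f x) := by
  have hs : ∀ x, f (shift x) = shift (f x) := fun x => congrFun hf x
  induction j using Int.induction_on with
  | zero =>
    have h : ∀ z : ℤ → A, tr 0 z = z := by
      intro z; funext k; simp [tr]
    rw [h, h]
  | succ n ih =>
    have h : ∀ z : ℤ → A, tr (n + 1) z = shift (tr n z) := by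
      intro z; funext k; simp only [tr, shift]; congr 1; ring
    rw [h, h, hs, ih]
  | pred n ih =>
    have h : ∀ z : ℤ → A, shift (tr (-n - 1) z) = tr (-n) z := by
      intro z; funext k; simp only [tr, shift]; congr 1; ring
    have inj : Function.Injective (shift : (ℤ → A) → (ℤ → A)) := by
      intro a b hab
      funext k
      have := congrFun hab (k - 1)
      simpa [shift] using this
    apply inj
    rw [← hs, h, h, ih]

theorem tr_iter (f : (ℤ → A) → (ℤ → A)) (hf : f ∘ shift = shift ∘ f) (j : ℤ) (t : ℕ)
    (x : ℤ → A) : f^[t] (tr j x) = tr j (f^[t] x) := by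
  have h : Function.Commute f (tr j) := fun x => tr_comm f hf j x
  exact h.iterate_left t x

theorem tr_mem (w : List A) (i j : ℤ) (x : ℤ → A) :
    tr j x ∈ cylinder w i ↔ x ∈ cylinder w (i + j) := by
  have : word (tr j x) i w.length = word x (i + j) w.length := by
    simp only [word_def, tr]
    apply List.map_congr_left
    intro k _
    congr 1; ring
  simp only [cylinder, mem_ofPred_eq, this]

/-- a word `s` occurs in `ω̃(f)` iff some word `v` placed at some position `i`
"enables" it: for all words `u, w` there are infinitely many `t` with
`f^t([u v w]_{i - |u|}) ∩ [s] ≠ ∅`. -/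
theorem stmt1 [Fintype A] [Nonempty A] [TopologicalSpace A] [DiscreteTopology A]
    (f : (ℤ → A) → (ℤ → A)) (hf : IsCA f) (s : List A) :
    s ∈ lang (genLimitSet f) ↔
      ∃ (v : List A) (i : ℤ), ∀ u w : List A,
        {t : ℕ |
          (f^[t] '' cylinder (u ++ v ++ w) (i - u.length) ∩ cylinder s 0).Nonempty}.Infinite := by
  constructor
  · rintro ⟨x, hx, j, hxj⟩
    by_contra hcon
    push Not at hcon
    have hC : IsClosed (cylinder s j)ᶜ := (isClopen_cylinder s j).2.isClosed_compl
    refine (hx (cylinder s j)ᶜ ⟨hC, ?_⟩) hxj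
    let P : Set (ℤ → A) := {x | ∃ U : Set (ℤ → A), IsOpen U ∧ x ∈ U ∧
      ∃ N : ℕ, ∀ y ∈ U, ∀ t ≥ N, f^[t] y ∉ cylinder s j}
    have hPo : IsOpen P := by
      rw [isOpen_iff_forall_mem_open]
      rintro x ⟨U, hU, hxU, h⟩
      exact ⟨U, fun y hy => ⟨U, hU, hy, h⟩, hU, hxU⟩
    have hPd : Dense P := by
      rw [dense_iff_inter_open]
      rintro U hU ⟨z, hz⟩
      obtain ⟨u, w, hz1, hz2⟩ := basis [] 0 z rfl U hU hz
      obtain ⟨u', w', hfin⟩ := hcon (u ++ [] ++ w) (0 - u.length - j)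
      obtain ⟨N, hN⟩ := hfin.bddAbove
      obtain ⟨a⟩ := ‹Nonempty A›
      set v := u ++ [] ++ w with hv
      set l := u' ++ v ++ w' with hl
      let y : ℤ → A := fun k => l.getD (k - (0 - u.length - u'.length)).toNat a
      have hy : y ∈ cylinder l (0 - u.length - u'.length) := by
        show word _ _ _ = _
        apply List.ext_getElem
        · simp [word_def]
        · intro n h1 h2
          simp [word_def, y, h2]
      have hsub : cylinder l (0 - u.length - u'.length) ⊆ cylinder v (0 - u.length) := by
        intro b hb
        have hb' : word b _ _ = _ := hb
        rw [hl, List.length_append, List.length_append, word_add, word_add] at hb'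
        have h1 := (List.append_inj hb' (by simp [word_length])).1
        have h2 := (List.append_inj h1 (by simp [word_length])).2
        have e : (0 : ℤ) - u.length - u'.length + u'.length = 0 - u.length := by ring
        rw [e] at h2
        exact h2
      refine ⟨y, hz2 (hsub hy), cylinder l (0 - u.length - u'.length),
        (isClopen_cylinder _ _).2, hy, N + 1, ?_⟩
      intro b hb t ht hbt
      have : t ≤ N := by
        apply hN
        refine ⟨f^[t] (tr j b), ⟨tr j b, ?_, rfl⟩, ?_⟩
        · rw [tr_mem]
          convert hb using 2
          ring
        · rw [tr_iter f hf.2, tr_mem]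
          simpa using hbt
      omega
    refine mem_of_superset (residual_of_dense_open hPo hPd) ?_
    rintro x ⟨U, hU, hxU, N, hN⟩ y hy hys
    have hfr : ∃ᶠ t in atTop, f^[t] x ∈ cylinder s j :=
      mapClusterPt_iff_frequently.1 hy _ ((isClopen_cylinder s j).2.mem_nhds hys)
    obtain ⟨t, ht, h⟩ := (frequently_atTop.1 hfr) N
    exact hN x hxU t ht h
  · rintro ⟨v, i, hvi⟩
    by_contra hcon
    have hS := isClopen_cylinder s 0
    have hdis : cylinder s 0 ∩ genLimitSet f = ∅ := by
      rw [eq_empty_iff_forall_notMem]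
      rintro y ⟨hy1, hy2⟩
      exact hcon ⟨y, hy2, 0, hy1⟩
    have hR : realm f (cylinder s 0)ᶜ ∈ residual (ℤ → A) := by
      rw [genLimitSet, sInter_eq_iInter] at hdis
      obtain ⟨F, hF⟩ := hS.1.isCompact.elim_finite_subfamily_closed _ (fun C => C.2.1) hdis
      have : (⋂ C ∈ F, realm f C.1) ∈ residual (ℤ → A) :=
        (Filter.biInter_finset_mem F).2 fun C _ => C.2.2
      refine mem_of_superset this ?_
      intro x hx y hy hys
      have : y ∈ cylinder s 0 ∩ ⋂ C ∈ F, C.1 := by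
        refine ⟨hys, ?_⟩
        rw [mem_iInter₂] at hx ⊢
        exact fun C hC => hx C hC hy
      rw [hF] at this
      exact this
    have hG : ∀ N : ℕ, ((⋃ t ≥ N, f^[t] ⁻¹' cylinder s 0) ∪ (cylinder v i)ᶜ) ∈
        residual (ℤ → A) := by
      intro N
      apply residual_of_dense_open
      · refine IsOpen.union (isOpen_biUnion fun t _ => hS.2.preimage (hf.1.iterate t)) ?_
        exact (isClopen_cylinder v i).1.isOpen_compl
      · rw [dense_iff_inter_open]
        rintro U hU ⟨z, hz⟩
        by_cases hzv : z ∈ cylinder v i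
        · obtain ⟨u, w, -, h2⟩ := basis v i z hzv U hU hz
          obtain ⟨t, ht, htN⟩ := (hvi u w).exists_gt N
          obtain ⟨_, ⟨y, hy, rfl⟩, hys⟩ := ht
          refine ⟨y, h2 hy, Or.inl ?_⟩
          simp only [mem_iUnion]
          exact ⟨t, htN.le, hys⟩
        · exact ⟨z, hz, Or.inr hzv⟩
    have hall := inter_mem hR (countable_iInter_mem.2 hG)
    have hd := dense_of_mem_residual hall
    obtain ⟨a⟩ := ‹Nonempty A›
    have hne : (cylinder v i).Nonempty := by
      refine ⟨fun k => v.getD (k - i).toNat a, ?_⟩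
      show word _ _ _ = _
      apply List.ext_getElem
      · simp [word_def]
      · intro n h1 h2
        simp [word_def, h2]
    obtain ⟨x, hxv, hxR, hxG⟩ := hd.inter_open_nonempty _ (isClopen_cylinder v i).2 hne
    have hfr : ∃ᶠ t in atTop, f^[t] x ∈ cylinder s 0 := by
      rw [frequently_atTop]
      intro N
      rcases mem_iInter.1 hxG N with h | h
      · simp only [mem_iUnion] at h
        obtain ⟨t, ht, h⟩ := h
        exact ⟨t, ht, h⟩
      · exact absurd hxv h
    obtain ⟨y, hys, hy⟩ := hS.1.isCompact.exists_mapClusterPt_of_frequently hfr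
    exact hxR hy hys

end Gls
end

section
/- Let f : {0,1}^ℤ → {0,1}^ℤ be the minimum cellular automaton defined by f(x)_i = min(x_i, x_{i+1}). Then the generic limit set of f is the singleton {x⁰}, where x⁰ is the all-zeros configuration. -/
open Filter Set Function

namespace Gls

variable {A : Type*}

theorem minCA_iter (t : ℕ) : ∀ (k : ℕ) (x : ℤ → Fin 2) (i : ℤ), k ≤ t → x (i + k) = 0 →
    (fun (x : ℤ → Fin 2) (i : ℤ) => min (x i) (x (i + 1)))^[t] x i = 0 := by
  induction t with
  | zero =>
    intro k x i hk hx
    obtain rfl : k = 0 := by omega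
    simpa using hx
  | succ t ih =>
    intro k x i hk hx
    rw [Function.iterate_succ_apply]
    cases k with
    | zero =>
      refine ih 0 _ i (Nat.zero_le _) ?_
      simp only [Nat.cast_zero, add_zero] at hx ⊢
      rw [hx]
      exact min_eq_left (Fin.zero_le _)
    | succ k =>
      refine ih k _ i (by omega) ?_
      have h : i + (k : ℤ) + 1 = i + ((k + 1 : ℕ) : ℤ) := by push_cast; ring
      simp only [h, hx]
      exact min_eq_right (Fin.zero_le _)

theorem minCA_tendsto (x : ℤ → Fin 2) (hx : ∀ n : ℤ, ∃ m, n ≤ m ∧ x m = 0) :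
    Tendsto (fun t => (fun (x : ℤ → Fin 2) (i : ℤ) => min (x i) (x (i + 1)))^[t] x) atTop
      (nhds (fun _ : ℤ => (0 : Fin 2))) := by
  rw [tendsto_pi_nhds]
  intro i
  obtain ⟨m, hm, h0⟩ := hx i
  obtain ⟨k, rfl⟩ := Int.le.dest hm
  refine tendsto_const_nhds.congr' ?_
  filter_upwards [eventually_ge_atTop k] with t ht
  exact (minCA_iter t k x i ht h0).symm

theorem minCA_good_residual :
    {x : ℤ → Fin 2 | ∀ n : ℤ, ∃ m, n ≤ m ∧ x m = 0} ∈ residual (ℤ → Fin 2) := by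
  rw [setOf_forall]
  refine countable_iInter_mem.2 fun n => residual_of_dense_open ?_ ?_
  · have : {x : ℤ → Fin 2 | ∃ m, n ≤ m ∧ x m = 0} =
        ⋃ m : ℤ, ⋃ _ : n ≤ m, (fun x : ℤ → Fin 2 => x m) ⁻¹' {0} := by
      ext x; simp
    rw [this]
    exact isOpen_iUnion fun m => isOpen_iUnion fun _ =>
      (isOpen_discrete _).preimage (continuous_apply m)
  · intro x
    refine mem_closure_of_tendsto (b := atTop)
      (f := fun k : ℕ => Function.update x (n + k) 0) ?_ ?_
    · rw [tendsto_pi_nhds]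
      intro i
      refine tendsto_const_nhds.congr' ?_
      filter_upwards [eventually_gt_atTop (i - n).toNat] with k hk
      rw [Function.update_of_ne]
      omega
    · exact Eventually.of_forall fun k => ⟨n + k, by omega, by simp⟩

/-- the generic limit set of the minimum CA `f(x)_i = min(x_i, x_{i+1})`
on `{0,1}^ℤ` is the singleton consisting of the all-zeros configuration. -/
theorem stmt3 :
    genLimitSet (fun (x : ℤ → Fin 2) (i : ℤ) => min (x i) (x (i + 1))) =
      {fun _ : ℤ => (0 : Fin 2)} := by
  apply Subset.antisymm
  · refine sInter_subset_of_mem ⟨isClosed_singleton, ?_⟩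
    filter_upwards [minCA_good_residual] with x hx y hy
    have h1 := minCA_tendsto x hx
    have h2 : ClusterPt y (nhds (fun _ : ℤ => (0 : Fin 2))) := ClusterPt.mono hy h1
    exact eq_of_nhds_neBot h2
  · rintro _ rfl C ⟨_, hC⟩
    obtain ⟨x, hx, hg⟩ := (dense_of_mem_residual (inter_mem hC minCA_good_residual)).nonempty
    exact hx (minCA_tendsto x hg).mapClusterPt

end Gls
end
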